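/- arXiv:2406.03617 — 2 statements merged into one kernel-verified Lean document; each statement's English description precedes it below -/
import Mathlib

section
/- Let r be a 4-dimensional semisimple representation of G over k such that the exterior square ⋀²r has a 1-dimensional subrepresentation. Then r has no irreducible 3-dimensional subrepresentation. -/
/-!
Statement 0: Let `r` be a 4-dimensional semisimple representation of `G` over `k` (with `k`
algebraically closed of characteristic 0) such that the exterior square `⋀²r` has a
1-dimensional subrepresentation.  Then `r` has no irreducible 3-dimensional subrepresentation.
-/

open Module

section ExtSq
variable {k : Type} [Field k]
variable {V W : Type} [AddCommGroup V] [Module k V] [AddCommGroup W] [Module k W]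

lemma map_mem_exteriorPower (f : V →ₗ[k] W) (n : ℕ) {x : ExteriorAlgebra k V}
    (hx : x ∈ ⋀[k]^n V) : ExteriorAlgebra.map f x ∈ ⋀[k]^n W := by
  rw [← ExteriorAlgebra.ιMulti_span_fixedDegree] at hx ⊢
  induction hx using Submodule.span_induction with
  | mem y hy =>
      obtain ⟨m, rfl⟩ := hy
      rw [ExteriorAlgebra.map_apply_ιMulti]
      exact Submodule.subset_span ⟨f ∘ m, rfl⟩
  | zero => simp
  | add y z _ _ h1 h2 => rw [map_add]; exact Submodule.add_mem _ h1 h2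
  | smul c y _ h => rw [map_smul]; exact Submodule.smul_mem _ c h

/-- The exterior square of a linear map, as a map between second exterior powers. -/
noncomputable def extSq (f : V →ₗ[k] W) : (⋀[k]^2 V) →ₗ[k] (⋀[k]^2 W) :=
  LinearMap.restrict (ExteriorAlgebra.map f).toLinearMap
    (fun _ hx => map_mem_exteriorPower f 2 hx)

end ExtSq

/-!
An element `x` of `⋀²V` is an alternating form on the dual space `V*`, and a line of `⋀²V` stable
under `G` gives a form which `G` preserves up to scalars.  An irreducible hyperplane `p` of `V` is
the same as a stable line `ℓ` of `V*` which is maximal among the proper stable subspaces.  The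
orthogonal of `ℓ` is stable, contains `ℓ`, and has codimension at most one, so it is everything as
soon as `dim V > 2`; thus `ℓ` lies in the radical, which is therefore either `ℓ` or `V*`.  If
`dim V` is even, the first case would give the form odd rank, so the form, and with it `x`,
vanishes.
-/

section AlternatingForms

variable {K W : Type*} [Field K] [AddCommGroup W] [Module K W] {B : LinearMap.BilinForm K W}

lemma disjoint_span_pair_orthogonal_of_isAlt (hB : B.IsAlt) {v w : W} (hvw : B v w ≠ 0) :
    Disjoint (Submodule.span K {v, w}) (B.orthogonal (Submodule.span K {v, w})) := by
  rw [Submodule.disjoint_def]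
  intro u hu hu'
  obtain ⟨a, b, rfl⟩ := Submodule.mem_span_pair.mp hu
  have hv : B v (a • v + b • w) = 0 := hu' v (Submodule.subset_span (by simp))
  have hw : B w (a • v + b • w) = 0 := hu' w (Submodule.subset_span (by simp))
  have hb : b = 0 := by simpa [hB.self_eq_zero, hvw] using hv
  have ha : a = 0 := by simpa [hB.self_eq_zero, ← hB.neg_eq v w, hvw] using hw
  simp [ha, hb]

lemma finrank_span_pair_of_isAlt (hB : B.IsAlt) {v w : W} (hvw : B v w ≠ 0) :
    finrank K (Submodule.span K {v, w}) = 2 := by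
  have hv : v ≠ 0 := by rintro rfl; simp at hvw
  have hli : LinearIndependent K ![v, w] := by
    rw [LinearIndependent.pair_iff' hv]
    rintro a rfl
    simp [hB.self_eq_zero] at hvw
  rw [← Matrix.range_cons_cons_empty v w ![]]
  exact finrank_span_eq_card hli

lemma finrank_ker_restrict_orthogonal (hB : B.IsRefl) {H : Submodule K W}
    (hH : Codisjoint (B.orthogonal H) H) :
    finrank K (LinearMap.ker (B.restrict (B.orthogonal H))) = finrank K (LinearMap.ker B) := by
  have hker : LinearMap.ker B ≤ B.orthogonal H :=
    B.orthogonal_top_eq_ker hB ▸ B.orthogonal_le le_top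
  rw [LinearMap.BilinForm.ker_restrict_eq_of_codisjoint hH
    fun x hx y hy ↦ hB y x (hx y hy)]
  exact (Submodule.comapSubtypeEquivOfLe hker).finrank_eq

theorem even_finrank_range_of_isAlt [FiniteDimensional K W] (hB : B.IsAlt) :
    Even (finrank K (LinearMap.range B)) := by
  induction hn : finrank K W using Nat.strong_induction_on generalizing W with
  | _ n ih =>
    by_cases h0 : B = 0
    · rw [LinearMap.range_eq_bot.mpr h0, finrank_bot]
      exact Even.zero
    obtain ⟨v, w, hvw⟩ : ∃ v w, B v w ≠ 0 := by
      by_contra! h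
      exact h0 (LinearMap.ext₂ h)
    set H := Submodule.span K {v, w}
    have hcompl : IsCompl H (B.orthogonal H) :=
      (LinearMap.BilinForm.isCompl_orthogonal_iff_disjoint hB.isRefl).mpr
        (disjoint_span_pair_orthogonal_of_isAlt hB hvw)
    have hH : finrank K H = 2 := finrank_span_pair_of_isAlt hB hvw
    have hsum := Submodule.finrank_add_eq_of_isCompl hcompl
    have hker := finrank_ker_restrict_orthogonal hB.isRefl hcompl.codisjoint.symm
    have hrank := B.finrank_range_add_finrank_ker
    have hrank' := (B.restrict (B.orthogonal H)).finrank_range_add_finrank_ker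
    obtain ⟨m, hm⟩ := ih (finrank K (B.orthogonal H)) (by lia)
      (B := B.restrict (B.orthogonal H)) (fun u ↦ hB u) rfl
    exact ⟨m + 1, by lia⟩

end AlternatingForms

section SemiinvariantForms

lemma orthogonal_mem_invtSubmodule {R G M : Type*} [CommRing R] [Group G] [AddCommGroup M]
    [Module R M] {σ : Representation R G M} {B : LinearMap.BilinForm R M}
    (hσ : ∀ g, ∃ c : R, ∀ u v, B (σ g u) (σ g v) = c * B u v)
    {N : Submodule R M} (hN : N ∈ σ.invtSubmodule) : B.orthogonal N ∈ σ.invtSubmodule := by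
  rw [σ.mem_invtSubmodule] at hN ⊢
  intro g v hv u hu
  obtain ⟨c, hc⟩ := hσ g
  have hu' : B (σ g⁻¹ u) v = 0 := hv _ (hN g⁻¹ hu)
  simpa [hu'] using hc (σ g⁻¹ u) v

theorem eq_zero_of_isAlt_of_maximal_invariant_line {K G W : Type*} [Field K] [Group G]
    [AddCommGroup W] [Module K W] {σ : Representation K G W} {B : LinearMap.BilinForm K W}
    (hB : B.IsAlt) (hσ : ∀ g, ∃ c : K, ∀ u v, B (σ g u) (σ g v) = c * B u v)
    (heven : Even (finrank K W)) (htwo : 2 < finrank K W)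
    {ℓ : Submodule K W} (hℓ : finrank K ℓ = 1) (hinv : ℓ ∈ σ.invtSubmodule)
    (hmax : ∀ U ∈ σ.invtSubmodule, ℓ ≤ U → U = ℓ ∨ U = ⊤) : B = 0 := by
  have : FiniteDimensional K W := .of_finrank_pos (by lia)
  have hisotropic : ℓ ≤ B.orthogonal ℓ := by
    obtain ⟨u, -, rfl⟩ :=
      (atom_iff_nonzero_span ℓ).mp (Submodule.isAtom_iff_finrank_eq_one.mpr hℓ)
    rw [Submodule.span_singleton_le_iff_mem,
      LinearMap.BilinForm.orthogonal_span_singleton_eq_toLin_ker, LinearMap.mem_ker]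
    exact hB.self_eq_zero u
  have horth : B.orthogonal ℓ = ⊤ := by
    refine (hmax _ (orthogonal_mem_invtSubmodule hσ hinv) hisotropic).resolve_left fun h ↦ ?_
    have := LinearMap.BilinForm.finrank_add_finrank_orthogonal' (B := B) ℓ
    rw [h] at this
    lia
  have hℓker : ℓ ≤ LinearMap.ker B := by
    rw [← B.orthogonal_top_eq_ker hB.isRefl, ← horth]
    exact B.le_orthogonal_orthogonal hB.isRefl
  have hker : LinearMap.ker B ∈ σ.invtSubmodule :=
    B.orthogonal_top_eq_ker hB.isRefl ▸
      orthogonal_mem_invtSubmodule hσ (Representation.invtSubmodule.top_mem σ)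
  rcases hmax _ hker hℓker with h | h
  · have hrank := B.finrank_range_add_finrank_ker
    have hrange := even_finrank_range_of_isAlt hB
    rw [h, hℓ] at hrank
    exact absurd (hrank ▸ heven) (by simpa [Nat.even_add_one] using hrange)
  · exact LinearMap.ker_eq_top.mp h

end SemiinvariantForms

section DualRepresentation

variable {R G M : Type*} [CommRing R] [Group G] [AddCommGroup M] [Module R M]
  {σ : Representation R G M}

lemma dualAnnihilator_mem_invtSubmodule_dual {p : Submodule R M} (hp : p ∈ σ.invtSubmodule) :
    p.dualAnnihilator ∈ σ.dual.invtSubmodule := by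
  rw [Representation.mem_invtSubmodule] at hp ⊢
  intro g f hf
  exact (Submodule.mem_dualAnnihilator _).mpr fun v hv ↦
    (Submodule.mem_dualAnnihilator f).mp hf _ (hp g⁻¹ hv)

lemma dualCoannihilator_mem_invtSubmodule {U : Submodule R (Dual R M)}
    (hU : U ∈ σ.dual.invtSubmodule) : U.dualCoannihilator ∈ σ.invtSubmodule := by
  rw [Representation.mem_invtSubmodule] at hU ⊢
  intro g v hv
  refine (Submodule.mem_dualCoannihilator _).mpr fun f hf ↦ ?_
  simpa [Representation.dual_apply, Dual.transpose_apply] using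
    (Submodule.mem_dualCoannihilator v).mp hv _ (hU g⁻¹ hf)

lemma eq_dualAnnihilator_or_eq_top_of_irreducible {K V : Type*} [Field K] [AddCommGroup V]
    [Module K V] [FiniteDimensional K V] {r : Representation K G V} {p : Submodule K V}
    (hirr : ∀ q ∈ r.invtSubmodule, q ≤ p → q = ⊥ ∨ q = p)
    {U : Submodule K (Dual K V)} (hU : U ∈ r.dual.invtSubmodule) (hpU : p.dualAnnihilator ≤ U) :
    U = p.dualAnnihilator ∨ U = ⊤ := by
  have hUp : U.dualCoannihilator ≤ p := by
    simpa [Subspace.dualAnnihilator_dualCoannihilator_eq] using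
      Submodule.dualCoannihilator_anti hpU
  rw [← Subspace.dualCoannihilator_dualAnnihilator_eq (W := U)]
  rcases hirr _ (dualCoannihilator_mem_invtSubmodule hU) hUp with h | h <;> simp [h]

end DualRepresentation

section BivectorForm

variable {R M N : Type*} [CommRing R] [AddCommGroup M] [Module R M] [AddCommGroup N] [Module R N]

/-- The bilinear form underlying an alternating map in two variables. -/
def bilinFormOfAlternatingMap (F : M [⋀^Fin 2]→ₗ[R] R) : LinearMap.BilinForm R M :=
  LinearMap.mk₂ R (fun u v ↦ F ![u, v])
    (fun _ _ _ ↦ F.map_vecCons_add _ _ _)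
    (fun _ _ _ ↦ F.map_vecCons_smul _ _ _)
    (fun u v w ↦ (F.curryLeft u).map_vecCons_add ![] v w)
    (fun c u v ↦ (F.curryLeft u).map_vecCons_smul ![] c v)

/-- The alternating form on the dual module defined by a bivector: for `x = v ∧ w` it maps
`(f, h)` to `f v * h w - h v * f w`. -/
noncomputable def bivectorForm (x : ⋀[R]^2 M) : LinearMap.BilinForm R (Dual R M) :=
  bilinFormOfAlternatingMap <|
    (Dual.eval R _ x).compAlternatingMap (exteriorPower.alternatingMapToDual R M 2)

lemma bivectorForm_apply (x : ⋀[R]^2 M) (f h : Dual R M) :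
    bivectorForm x f h = exteriorPower.alternatingMapToDual R M 2 ![f, h] x := rfl

lemma isAlt_bivectorForm (x : ⋀[R]^2 M) : (bivectorForm x).IsAlt := fun f ↦ by
  rw [bivectorForm_apply,
    (exteriorPower.alternatingMapToDual R M 2).map_eq_zero_of_eq ![f, f]
      (i := 0) (j := 1) rfl zero_ne_one,
    LinearMap.zero_apply]

lemma bivectorForm_smul (c : R) (x : ⋀[R]^2 M) : bivectorForm (c • x) = c • bivectorForm x := by
  ext f h
  simp [bivectorForm_apply]

lemma bivectorForm_map (φ : M →ₗ[R] N) (x : ⋀[R]^2 M) (f h : Dual R N) :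
    bivectorForm (exteriorPower.map 2 φ x) f h = bivectorForm x (f ∘ₗ φ) (h ∘ₗ φ) := by
  simp only [bivectorForm_apply]
  rw [← LinearMap.comp_apply]
  congr 1
  ext m
  simp [Matrix.det_fin_two]

lemma eq_zero_of_bivectorForm_eq_zero [Module.Free R M] {x : ⋀[R]^2 M}
    (hx : bivectorForm x = 0) : x = 0 := by
  obtain ⟨I, b⟩ := Module.Free.exists_basis R M
  classical
  let : LinearOrder I := linearOrderOfSTO WellOrderingRel
  refine (b.exteriorPower 2).ext_elem fun s ↦ ?_
  rw [exteriorPower.basis_repr_apply, map_zero, Finsupp.zero_apply]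
  let e := Set.powersetCard.ofFinEmbEquiv.symm s
  have hs : ![b.coord (e 0), b.coord (e 1)] = b.coord ∘ e := by
    ext i
    fin_cases i <;> rfl
  have := LinearMap.congr_fun₂ hx (b.coord (e 0)) (b.coord (e 1))
  rw [bivectorForm_apply, hs] at this
  simpa [exteriorPower.ιMultiDual, exteriorPower.ιMulti_family, exteriorPower.pairingDual]
    using this

end BivectorForm

section ExteriorSquare

lemma coe_exteriorPower_map {R M N : Type*} [CommRing R] [AddCommGroup M] [Module R M]
    [AddCommGroup N] [Module R N] {n : ℕ} (φ : M →ₗ[R] N) (x : ⋀[R]^n M) :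
    (exteriorPower.map n φ x : ExteriorAlgebra R N) = ExteriorAlgebra.map φ x := by
  suffices (⋀[R]^n N).subtype ∘ₗ exteriorPower.map n φ =
      (ExteriorAlgebra.map φ).toLinearMap ∘ₗ (⋀[R]^n M).subtype from LinearMap.congr_fun this x
  ext m
  simp [ExteriorAlgebra.map_apply_ιMulti]

lemma extSq_eq_map {k V W : Type} [Field k] [AddCommGroup V] [Module k V] [AddCommGroup W]
    [Module k W] (φ : V →ₗ[k] W) : extSq φ = exteriorPower.map 2 φ :=
  LinearMap.ext fun x ↦ Subtype.ext (coe_exteriorPower_map φ x).symm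

end ExteriorSquare

section Semiinvariance

variable {K G V : Type*} [Field K] [Group G] [AddCommGroup V] [Module K V]

lemma bivectorForm_dual_apply {r : Representation K G V} {x : ⋀[K]^2 V} {g : G}
    {c : K} (hx : exteriorPower.map 2 (r g⁻¹) x = c • x) (f h : Dual K V) :
    bivectorForm x (r.dual g f) (r.dual g h) = c * bivectorForm x f h := by
  have := bivectorForm_map (r g⁻¹) x f h
  rw [hx, bivectorForm_smul] at this
  exact this.symm

theorem stmt_0_general (r : Representation K G V) (heven : Even (finrank K V))
    (htwo : 2 < finrank K V)
    (hline : ∃ L : Submodule K (⋀[K]^2 V), finrank K L = 1 ∧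
      ∀ g, ∀ x ∈ L, exteriorPower.map 2 (r g) x ∈ L) :
    ¬ ∃ p ∈ r.invtSubmodule, finrank K p + 1 = finrank K V ∧
      ∀ q ∈ r.invtSubmodule, q ≤ p → q = ⊥ ∨ q = p := by
  have : FiniteDimensional K V := .of_finrank_pos (by lia)
  rintro ⟨p, hp, hcodim, hirr⟩
  obtain ⟨L, hL, hLinv⟩ := hline
  obtain ⟨x, hx, rfl⟩ := (atom_iff_nonzero_span L).mp (Submodule.isAtom_iff_finrank_eq_one.mpr hL)
  have hsemi (g : G) : ∃ c : K, ∀ f h,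
      bivectorForm x (r.dual g f) (r.dual g h) = c * bivectorForm x f h := by
    obtain ⟨c, hc⟩ :=
      Submodule.mem_span_singleton.mp (hLinv g⁻¹ x (Submodule.mem_span_singleton_self x))
    exact ⟨c, bivectorForm_dual_apply hc.symm⟩
  have hann : finrank K p.dualAnnihilator = 1 := by
    have := Subspace.finrank_add_finrank_dualAnnihilator_eq p
    lia
  have hform : bivectorForm x = 0 :=
    eq_zero_of_isAlt_of_maximal_invariant_line (isAlt_bivectorForm _) hsemi
      (by rwa [Subspace.dual_finrank_eq]) (by rwa [Subspace.dual_finrank_eq]) hann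
      (dualAnnihilator_mem_invtSubmodule_dual hp)
      fun U ↦ eq_dualAnnihilator_or_eq_top_of_irreducible hirr
  exact hx (eq_zero_of_bivectorForm_eq_zero hform)

end Semiinvariance

theorem stmt_0 {k G V : Type} [Field k] [IsAlgClosed k] [CharZero k] [Group G]
    [AddCommGroup V] [Module k V] [FiniteDimensional k V]
    (r : Representation k G V) (h4 : finrank k V = 4)
    -- `r` is semisimple: `V` is the direct sum of a family of irreducible subrepresentations
    (hss : ∃ (ι : Type) (c : ι → Submodule k V),
        iSupIndep c ∧ iSup c = ⊤ ∧
        ∀ i, (∀ g : G, ∀ v ∈ c i, r g v ∈ c i) ∧ c i ≠ ⊥ ∧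
          ∀ q : Submodule k V, q ≤ c i → (∀ g : G, ∀ v ∈ q, r g v ∈ q) →
            q = ⊥ ∨ q = c i)
    -- `⋀²r` has a 1-dimensional subrepresentation
    (hline : ∃ L : Submodule k (⋀[k]^2 V), finrank k L = 1 ∧
        ∀ g : G, ∀ x ∈ L, extSq (r g) x ∈ L) :
    -- `r` has no irreducible 3-dimensional subrepresentation
    ¬ ∃ p : Submodule k V, finrank k p = 3 ∧
        (∀ g : G, ∀ v ∈ p, r g v ∈ p) ∧
        ∀ q : Submodule k V, q ≤ p → (∀ g : G, ∀ v ∈ q, r g v ∈ q) →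
          q = ⊥ ∨ q = p := by
  rintro ⟨p, hp3, hp, hirr⟩
  simp only [extSq_eq_map] at hline
  refine stmt_0_general r ⟨2, h4⟩ (by lia) hline ⟨p, ?_, by lia, ?_⟩
  · exact r.mem_invtSubmodule.mpr fun g v ↦ hp g v
  · exact fun q hq hqp ↦ hirr q hqp fun g v hv ↦ r.mem_invtSubmodule.mp hq g hv
end

section
/- Let r = σ₁ ⊕ σ₂, where σ₁ and σ₂ are irreducible 2-dimensional representations of G over k, and let ν be a character of G such that ν occurs in ⋀²r and (det σ₁)·(det σ₂) = ν². Then either det σ₁ = det σ₂ = ν, or there exists a character χ of G with σ₂ ≅ σ₁ ⊗ χ. -/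
/-!
Statement 2: Let `r = σ₁ ⊕ σ₂`, where `σ₁` and `σ₂` are irreducible 2-dimensional
representations of `G` over `k`, and let `ν` be a character of `G` such that `ν` occurs in
`⋀²r` and `(det σ₁)·(det σ₂) = ν²`.  Then either `det σ₁ = det σ₂ = ν`, or there exists a
character `χ` of `G` with `σ₂ ≅ σ₁ ⊗ χ`.
-/

open Module

/-!
As a functor of `(V₁, V₂)`, the exterior square of `V₁ × V₂` is `⋀²V₁ × ⋀²V₂ × (V₁ ⊗ V₂)`, so a
nonzero `ν`-eigenvector has a nonzero component in one of the three summands. On `⋀²Vᵢ` the group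
acts through `det σᵢ`, so a nonzero component there forces `det σᵢ = ν`, and the other determinant
is then `ν` as well because their product is `ν²`. Otherwise the component in `V₁ ⊗ V₂` is nonzero.
The area form of the plane `V₁` satisfies `ω (f v) (f w) = det f * ω v w`, that is, it identifies
`σ₁` with `σ₁^∨ ⊗ det σ₁`; contracting with it therefore yields a nonzero map from a twist of `σ₁`
to `σ₂`, which Schur's lemma and equality of dimensions make an isomorphism.
-/

open scoped TensorProduct

section AlternatingMaps

variable {R M N : Type*} [CommRing R] [AddCommGroup M] [Module R M] [AddCommGroup N] [Module R N]

lemma alternatingMap_eq_basis_det_smul {ι : Type*} [Fintype ι] [DecidableEq ι] (b : Basis ι R M)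
    (F : M [⋀^ι]→ₗ[R] N) (m : ι → M) : F m = b.det m • F b := by
  suffices h : F = (LinearMap.toSpanSingleton R N (F b)).compAlternatingMap b.det from
    congr($h m)
  refine b.ext_alternating fun v hv => ?_
  let π : Equiv.Perm ι := .ofBijective v (Finite.injective_iff_bijective.mp hv)
  change F (b ∘ π) = b.det (b ∘ π) • F b
  simp only [AlternatingMap.map_perm, b.det_self, smul_assoc, one_smul]

lemma exteriorPower_map_eq_det_smul {n : ℕ} (b : Basis (Fin n) R M) (f : M →ₗ[R] M) :
    exteriorPower.map n f = LinearMap.det f • LinearMap.id := by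
  ext m : 2
  simp only [LinearMap.compAlternatingMap_apply, exteriorPower.map_apply_ιMulti,
    LinearMap.smul_apply, LinearMap.id_apply]
  rw [alternatingMap_eq_basis_det_smul b _ (f ∘ m), alternatingMap_eq_basis_det_smul b _ m,
    b.det_comp, mul_smul]

/-- An alternating map in two variables, regarded as a bilinear map. -/
def bilinOfAlternating (F : M [⋀^Fin 2]→ₗ[R] N) : M →ₗ[R] M →ₗ[R] N :=
  LinearMap.mk₂ R (fun v w => F ![v, w])
    (fun v v' w => F.map_vecCons_add ![w] v v')
    (fun c v w => F.map_vecCons_smul ![w] c v)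
    (fun v w w' => (F.curryLeft v).map_vecCons_add ![] w w')
    (fun c v w => (F.curryLeft v).map_vecCons_smul ![] c w)

lemma bilinOfAlternating_apply (F : M [⋀^Fin 2]→ₗ[R] N) (m : Fin 2 → M) :
    bilinOfAlternating F (m 0) (m 1) = F m :=
  congrArg F (List.ofFn_injective rfl)

lemma bilinOfAlternating_swap (F : M [⋀^Fin 2]→ₗ[R] N) (v w : M) :
    bilinOfAlternating F w v = -bilinOfAlternating F v w :=
  (bilinOfAlternating_apply F (![v, w] ∘ Equiv.swap 0 1)).trans (F.map_swap ![v, w] zero_ne_one)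

end AlternatingMaps

section ExteriorSquareProd

variable {R M N M' N' : Type*} [CommRing R] [AddCommGroup M] [Module R M] [AddCommGroup N]
  [Module R N] [AddCommGroup M'] [Module R M'] [AddCommGroup N'] [Module R N']

variable (R M N) in
/-- The projection of `⋀²(M × N)` onto its summand `M ⊗ N`, sending `(a, b) ∧ (a', b')` to
`a ⊗ b' - a' ⊗ b`. -/
noncomputable def exteriorSquareProdToTensor : ⋀[R]^2 (M × N) →ₗ[R] M ⊗[R] N :=
  exteriorPower.alternatingMapLinearEquiv
    { toFun m := (m 0).1 ⊗ₜ (m 1).2 - (m 1).1 ⊗ₜ (m 0).2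
      map_update_add' := by
        intro _ m i x y
        fin_cases i <;> simp [Function.update, TensorProduct.add_tmul, TensorProduct.tmul_add] <;>
          abel
      map_update_smul' := by
        intro _ m i c x
        fin_cases i <;> simp [Function.update, TensorProduct.smul_tmul', smul_sub]
      map_eq_zero_of_eq' := by
        intro m i j h hij
        have h01 : m 0 = m 1 := by fin_cases i <;> fin_cases j <;> simp_all
        simp [h01] }

variable (R M N) in
/-- The inclusion of the summand `M ⊗ N` in `⋀²(M × N)`, sending `a ⊗ b` to `(a, 0) ∧ (0, b)`. -/
noncomputable def tensorToExteriorSquareProd : M ⊗[R] N →ₗ[R] ⋀[R]^2 (M × N) :=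
  TensorProduct.lift <| (bilinOfAlternating (exteriorPower.ιMulti R 2)).compl₁₂
    (LinearMap.inl R M N) (LinearMap.inr R M N)

lemma exteriorSquareProdToTensor_ιMulti (m : Fin 2 → M × N) :
    exteriorSquareProdToTensor R M N (exteriorPower.ιMulti R 2 m) =
      (m 0).1 ⊗ₜ (m 1).2 - (m 1).1 ⊗ₜ (m 0).2 :=
  exteriorPower.alternatingMapLinearEquiv_apply_ιMulti _ m

lemma exteriorSquareProdToTensor_map_prodMap (f : M →ₗ[R] M') (g : N →ₗ[R] N')
    (x : ⋀[R]^2 (M × N)) :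
    exteriorSquareProdToTensor R M' N' (exteriorPower.map 2 (f.prodMap g) x) =
      TensorProduct.map f g (exteriorSquareProdToTensor R M N x) := by
  suffices h : exteriorSquareProdToTensor R M' N' ∘ₗ exteriorPower.map 2 (f.prodMap g) =
      TensorProduct.map f g ∘ₗ exteriorSquareProdToTensor R M N from congr($h x)
  ext m
  simp [exteriorSquareProdToTensor_ιMulti]

lemma exteriorSquareProd_eq_sum_components (x : ⋀[R]^2 (M × N)) :
    x = exteriorPower.map 2 (LinearMap.inl R M N) (exteriorPower.map 2 (LinearMap.fst R M N) x) +
      exteriorPower.map 2 (LinearMap.inr R M N) (exteriorPower.map 2 (LinearMap.snd R M N) x) +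
      tensorToExteriorSquareProd R M N (exteriorSquareProdToTensor R M N x) := by
  let inl := LinearMap.inl R M N
  let inr := LinearMap.inr R M N
  suffices h : LinearMap.id =
      exteriorPower.map 2 inl ∘ₗ exteriorPower.map 2 (LinearMap.fst R M N) +
        exteriorPower.map 2 inr ∘ₗ exteriorPower.map 2 (LinearMap.snd R M N) +
        tensorToExteriorSquareProd R M N ∘ₗ exteriorSquareProdToTensor R M N from congr($h x)
  ext m : 2
  let wedge := bilinOfAlternating (exteriorPower.ιMulti R 2 (M := M × N))
  have m_eq (i : Fin 2) : m i = inl (m i).1 + inr (m i).2 := by simp [inl, inr]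
  have wedge_eq : wedge (m 0) (m 1) =
      wedge (inl (m 0).1) (inl (m 1).1) + wedge (inr (m 0).2) (inr (m 1).2) +
        (wedge (inl (m 0).1) (inr (m 1).2) - wedge (inl (m 1).1) (inr (m 0).2)) := by
    conv_lhs => rw [m_eq 0, m_eq 1]
    simp only [map_add, LinearMap.add_apply]
    rw [bilinOfAlternating_swap _ (inl (m 1).1) (inr (m 0).2)]
    abel
  simp only [LinearMap.compAlternatingMap_apply, LinearMap.add_apply, LinearMap.comp_apply,
    LinearMap.id_apply, exteriorPower.map_apply_ιMulti, exteriorSquareProdToTensor_ιMulti,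
    tensorToExteriorSquareProd, map_sub, TensorProduct.lift.tmul, LinearMap.compl₁₂_apply]
  simp only [← bilinOfAlternating_apply]
  exact wedge_eq

end ExteriorSquareProd

section Contraction

variable {R M N : Type*} [CommRing R] [AddCommGroup M] [Module R M] [AddCommGroup N] [Module R N]

/-- Contraction of the first factor of a tensor with a bilinear form `ω`: the tensor `a ⊗ b` is
sent to the linear map `v ↦ ω a v • b`. -/
noncomputable def contraction (ω : M →ₗ[R] Dual R M) : M ⊗[R] N →ₗ[R] M →ₗ[R] N :=
  dualTensorHom R M N ∘ₗ ω.rTensor N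

lemma contraction_tmul (ω : M →ₗ[R] Dual R M) (a v : M) (n : N) :
    contraction ω (a ⊗ₜ n) v = ω a v • n := by
  simp [contraction]

lemma contraction_map {ω : M →ₗ[R] Dual R M} {f : M →ₗ[R] M} {c : R}
    (hf : ∀ v w, ω (f v) (f w) = c * ω v w) (g : N →ₗ[R] N) (t : M ⊗[R] N) (v : M) :
    contraction ω (TensorProduct.map f g t) (f v) = c • g (contraction ω t v) := by
  induction t with
  | zero => simp
  | tmul a n => simp [contraction_tmul, hf, mul_smul]
  | add s t hs ht => simp [hs, ht]

lemma contraction_injective [Module.Free R M] [Module.Finite R M] [Module.Flat R N]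
    {ω : M →ₗ[R] Dual R M} (hω : Function.Injective ω) :
    Function.Injective (contraction (N := N) ω) :=
  (dualTensorHomEquiv R M N).injective.comp
    (Module.Flat.rTensor_preserves_injective_linearMap ω hω)

/-- The area form of a plane relative to a basis: `areaForm b v w = b.det ![v, w]`. -/
noncomputable def areaForm (b : Basis (Fin 2) R M) : M →ₗ[R] Dual R M :=
  bilinOfAlternating b.det

lemma areaForm_map (b : Basis (Fin 2) R M) (f : M →ₗ[R] M) (v w : M) :
    areaForm b (f v) (f w) = LinearMap.det f * areaForm b v w := by
  have h := b.det_comp f ![v, w]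
  rwa [← bilinOfAlternating_apply, ← bilinOfAlternating_apply] at h

lemma areaForm_injective (b : Basis (Fin 2) R M) : Function.Injective (areaForm b) := by
  refine (injective_iff_map_eq_zero _).mpr fun v hv => b.ext_elem fun i => ?_
  have h (w : M) : b.repr v 0 * b.repr w 1 - b.repr w 0 * b.repr v 1 = 0 := by
    simpa [areaForm, bilinOfAlternating, b.det_apply, Matrix.det_fin_two,
      b.toMatrix_apply] using congr($hv w)
  fin_cases i
  · simpa using h (b 1)
  · simpa using h (b 0)

end Contraction

section Representations

variable {k G U V V₁ V₂ : Type*} [Field k] [AddCommGroup U] [Module k U] [AddCommGroup V]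
  [Module k V] [AddCommGroup V₁] [Module k V₁] [AddCommGroup V₂] [Module k V₂]

lemma det_eq_of_exteriorPower_map_eq_smul {n : ℕ} (b : Basis (Fin n) k V) {f : U →ₗ[k] U}
    {f' : V →ₗ[k] V} {π : U →ₗ[k] V} (hπ : π ∘ₗ f = f' ∘ₗ π) {c : k} {x : ⋀[k]^n U}
    (hx : exteriorPower.map n f x = c • x) (hπx : exteriorPower.map n π x ≠ 0) :
    LinearMap.det f' = c := by
  refine smul_left_injective k hπx ?_
  calc LinearMap.det f' • exteriorPower.map n π x
      = exteriorPower.map n f' (exteriorPower.map n π x) := by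
        rw [exteriorPower_map_eq_det_smul b, LinearMap.smul_apply, LinearMap.id_apply]
    _ = exteriorPower.map n π (exteriorPower.map n f x) := by
        rw [← LinearMap.comp_apply, ← exteriorPower.map_comp, ← hπ, exteriorPower.map_comp,
          LinearMap.comp_apply]
    _ = c • exteriorPower.map n π x := by rw [hx, map_smul]

variable [Monoid G]

lemma isIrreducible_iff_forall_invariant (σ : Representation k G V) :
    σ.IsIrreducible ↔ (⊥ : Submodule k V) ≠ ⊤ ∧
      ∀ p : Submodule k V, (∀ g : G, ∀ v ∈ p, σ g v ∈ p) → p = ⊥ ∨ p = ⊤ := by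
  constructor
  · intro hσ
    refine ⟨fun h => bot_ne_top (α := Subrepresentation σ) ?_, fun p hp => ?_⟩
    · exact Subrepresentation.toSubmodule_injective h
    · exact (eq_bot_or_eq_top (⟨p, hp⟩ : Subrepresentation σ)).imp
        (congrArg Subrepresentation.toSubmodule) (congrArg Subrepresentation.toSubmodule)
  · rintro ⟨hne, hσ⟩
    exact
      { exists_pair_ne := ⟨⊥, ⊤, fun h => hne (congrArg Subrepresentation.toSubmodule h)⟩
        eq_bot_or_eq_top p := (hσ p.toSubmodule p.apply_mem_toSubmodule).imp
          (Subrepresentation.toSubmodule_injective ·) (Subrepresentation.toSubmodule_injective ·) }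

/-- The twist `σ ⊗ χ` of a representation by a character, on the underlying space of `σ`. -/
def twist (σ : Representation k G V) (χ : G →* kˣ) : Representation k G V where
  toFun g := (χ g : k) • σ g
  map_one' := by simp
  map_mul' g h := by simp only [map_mul, Units.val_mul, smul_mul_smul_comm]

lemma twist_apply (σ : Representation k G V) (χ : G →* kˣ) (g : G) (v : V) :
    twist σ χ g v = (χ g : k) • σ g v := rfl

lemma twist_isIrreducible (σ : Representation k G V) [σ.IsIrreducible] (χ : G →* kˣ) :
    (twist σ χ).IsIrreducible := by
  obtain ⟨hne, hσ⟩ := (isIrreducible_iff_forall_invariant σ).mp ‹_›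
  refine (isIrreducible_iff_forall_invariant _).mpr ⟨hne, fun p hp => hσ p fun g v hv => ?_⟩
  exact (p.smul_mem_iff (χ g).ne_zero).mp (hp g v hv)

lemma nonempty_equiv_of_intertwiningMap_ne_zero [FiniteDimensional k V₁] [FiniteDimensional k V₂]
    {σ₁ : Representation k G V₁} {σ₂ : Representation k G V₂} [σ₁.IsIrreducible]
    (hfinrank : finrank k V₁ = finrank k V₂) {T : σ₁.IntertwiningMap σ₂} (hT : T ≠ 0) :
    Nonempty (σ₁.Equiv σ₂) := by
  have hinj := (Representation.IsIrreducible.injective_or_eq_zero T).resolve_right hT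
  exact ⟨.mk (T.toLinearMap.linearEquivOfInjective hinj hfinrank) T.isIntertwining'⟩

lemma exists_twist_equiv_of_tprod_eq_smul {σ₁ : Representation k G V₁}
    {σ₂ : Representation k G V₂} [σ₁.IsIrreducible] (h1 : finrank k V₁ = 2)
    (h2 : finrank k V₂ = 2) (hdet : ∀ g, IsUnit (LinearMap.det (σ₁ g))) {ν : G →* kˣ}
    {t : V₁ ⊗[k] V₂} (ht : t ≠ 0) (hν : ∀ g, σ₁.tprod σ₂ g t = (ν g : k) • t) :
    ∃ χ : G →* kˣ, Nonempty ((twist σ₁ χ).Equiv σ₂) := by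
  have : FiniteDimensional k V₁ := .of_finrank_eq_succ h1
  have : FiniteDimensional k V₂ := .of_finrank_eq_succ h2
  let b := finBasisOfFinrankEq k V₁ h1
  let δ : G →* kˣ := IsUnit.liftRight (LinearMap.det.comp σ₁) hdet
  have hδ (g : G) : (δ g : k) = LinearMap.det (σ₁ g) := rfl
  let T := contraction (areaForm b) t
  have hT (g : G) (v : V₁) : T (twist σ₁ (ν / δ) g v) = σ₂ g (T v) := by
    have h : (ν g : k) • T (σ₁ g v) = (δ g : k) • σ₂ g (T v) := by
      rw [hδ, ← contraction_map (areaForm_map b (σ₁ g)), ← Representation.tprod_apply, hν,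
        map_smul, LinearMap.smul_apply]
    rw [twist_apply, map_smul, MonoidHom.div_apply, Units.val_div_eq_div_val, div_eq_inv_mul,
      mul_smul, h, inv_smul_smul₀ (δ g).ne_zero]
  have hT0 : T ≠ 0 := (map_ne_zero_iff _ (contraction_injective (areaForm_injective b))).mpr ht
  have := twist_isIrreducible σ₁ (ν / δ)
  exact ⟨ν / δ, nonempty_equiv_of_intertwiningMap_ne_zero (h1.trans h2.symm)
    (T := ⟨T, fun g => LinearMap.ext (hT g)⟩) fun h => hT0 congr(($h).toLinearMap)⟩

theorem stmt_2_general {σ₁ : Representation k G V₁} {σ₂ : Representation k G V₂}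
    [σ₁.IsIrreducible] (h1 : finrank k V₁ = 2) (h2 : finrank k V₂ = 2) {ν : G →* kˣ}
    (hocc : ∃ x : ⋀[k]^2 (V₁ × V₂), x ≠ 0 ∧
      ∀ g, exteriorPower.map 2 (σ₁.prod σ₂ g) x = (ν g : k) • x)
    (hdet : ∀ g, LinearMap.det (σ₁ g) * LinearMap.det (σ₂ g) = (ν g : k) ^ 2) :
    ((∀ g, LinearMap.det (σ₁ g) = ν g) ∧ ∀ g, LinearMap.det (σ₂ g) = ν g) ∨
      ∃ χ : G →* kˣ, Nonempty ((twist σ₁ χ).Equiv σ₂) := by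
  obtain ⟨x, hx, hν⟩ := hocc
  have := FiniteDimensional.of_finrank_eq_succ h1
  have := FiniteDimensional.of_finrank_eq_succ h2
  by_cases hx₁ : exteriorPower.map 2 (LinearMap.fst k V₁ V₂) x = 0
  · by_cases hx₂ : exteriorPower.map 2 (LinearMap.snd k V₁ V₂) x = 0
    · have ht : exteriorSquareProdToTensor k V₁ V₂ x ≠ 0 := fun ht => hx <| by
        rw [exteriorSquareProd_eq_sum_components x, hx₁, hx₂, ht]
        simp only [map_zero, add_zero]
      have hunit (g : G) : IsUnit (LinearMap.det (σ₁ g)) :=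
        isUnit_of_mul_isUnit_left (hdet g ▸ (ν g).isUnit.pow 2)
      refine .inr (exists_twist_equiv_of_tprod_eq_smul (ν := ν) h1 h2 hunit ht fun g => ?_)
      rw [← map_smul, ← hν]
      exact (exteriorSquareProdToTensor_map_prodMap (σ₁ g) (σ₂ g) x).symm
    · have hd₂ (g : G) : LinearMap.det (σ₂ g) = ν g :=
        det_eq_of_exteriorPower_map_eq_smul (finBasisOfFinrankEq k V₂ h2)
          (π := LinearMap.snd k V₁ V₂) rfl (hν g) hx₂
      exact .inl ⟨fun g => mul_right_cancel₀ (ν g).ne_zero (by rw [← sq, ← hdet, hd₂]), hd₂⟩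
  · have hd₁ (g : G) : LinearMap.det (σ₁ g) = ν g :=
      det_eq_of_exteriorPower_map_eq_smul (finBasisOfFinrankEq k V₁ h1)
        (π := LinearMap.fst k V₁ V₂) rfl (hν g) hx₁
    exact .inl ⟨hd₁, fun g => mul_left_cancel₀ (ν g).ne_zero (by rw [← sq, ← hdet, hd₁])⟩

end Representations

lemma extSq_eq_exteriorPower_map {k V W : Type} [Field k] [AddCommGroup V] [Module k V]
    [AddCommGroup W] [Module k W] (f : V →ₗ[k] W) : extSq f = exteriorPower.map 2 f := by
  ext m : 2
  rw [LinearMap.compAlternatingMap_apply, LinearMap.compAlternatingMap_apply,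
    exteriorPower.map_apply_ιMulti]
  exact Subtype.ext (ExteriorAlgebra.map_apply_ιMulti f m)

theorem stmt_2 {k G V₁ V₂ : Type} [Field k] [IsAlgClosed k] [CharZero k] [Group G]
    [AddCommGroup V₁] [Module k V₁] [FiniteDimensional k V₁]
    [AddCommGroup V₂] [Module k V₂] [FiniteDimensional k V₂]
    (σ₁ : Representation k G V₁) (σ₂ : Representation k G V₂)
    (h1 : finrank k V₁ = 2) (h2 : finrank k V₂ = 2)
    -- σ₁ and σ₂ are irreducible
    (hirr1 : (⊥ : Submodule k V₁) ≠ ⊤ ∧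
      ∀ p : Submodule k V₁, (∀ g : G, ∀ v ∈ p, σ₁ g v ∈ p) → p = ⊥ ∨ p = ⊤)
    (hirr2 : (⊥ : Submodule k V₂) ≠ ⊤ ∧
      ∀ p : Submodule k V₂, (∀ g : G, ∀ v ∈ p, σ₂ g v ∈ p) → p = ⊥ ∨ p = ⊤)
    (ν : G →* kˣ)
    -- ν occurs in ⋀²r, where r = σ₁ ⊕ σ₂ acts on V₁ × V₂
    (hocc : ∃ L : Submodule k (⋀[k]^2 (V₁ × V₂)), finrank k L = 1 ∧
        ∀ g : G, ∀ x ∈ L,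
          extSq (LinearMap.prodMap (σ₁ g) (σ₂ g)) x = (ν g : k) • x)
    -- (det σ₁)·(det σ₂) = ν²
    (hdet : ∀ g : G, LinearMap.det (σ₁ g) * LinearMap.det (σ₂ g) = ((ν g : k)) ^ 2) :
    ((∀ g : G, LinearMap.det (σ₁ g) = (ν g : k)) ∧
      (∀ g : G, LinearMap.det (σ₂ g) = (ν g : k))) ∨
    (∃ χ : G →* kˣ, ∃ e : V₁ ≃ₗ[k] V₂,
      ∀ (g : G) (v : V₁), e ((χ g : k) • σ₁ g v) = σ₂ g (e v)) := by
  have := (isIrreducible_iff_forall_invariant σ₁).mpr hirr1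
  obtain ⟨L, hL, hLν⟩ := hocc
  obtain ⟨x, hxL, hx⟩ := L.exists_mem_ne_zero_of_ne_bot (L.one_le_finrank_iff.mp hL.ge)
  refine (stmt_2_general h1 h2 ⟨x, hx, fun g => ?_⟩ hdet).imp_right ?_
  · exact extSq_eq_exteriorPower_map (_ : V₁ × V₂ →ₗ[k] V₁ × V₂) ▸ hLν g x hxL
  · exact fun ⟨χ, ⟨φ⟩⟩ => ⟨χ, φ.toLinearEquiv, φ.isIntertwining⟩
end
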